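/- Let Δ ∈ ℤ^d be admissible. Then for every natural number μ, Δ(R_μ) = R_μ. -/

import Mathlib

/-!
Write `s` for the sum of the coordinates of an admissible `Δ`. One coordinate is `1`, the others are
`≤ 0` and at least one of them is `≤ -1`, so `s ≤ 0`: a step along `Δ` does not increase the sum of
the coordinates (`IsAdmissible.sum_le`). Hence the trace of `R_μ` on a line with direction `Δ` is an
up-closed part of the chain of points of `ℕ^d` on that line, and an up-closed part with `k`
elements of a finite chain consists of its `k` largest elements. In terms of the counts defining
`deltaOf`: if `p ∈ R_μ`, then `p` and all its successors on the line lie in `R_μ`, and if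
`p ∉ R_μ`, then every point of `R_μ` on the line is a strict successor of `p`. The strictly negative
coordinate makes the set of successors finite (`IsAdmissible.finite_steps`).
-/

/-- Componentwise coercion `ℕ^d → ℤ^d`. -/
def toInt {d : ℕ} (p : Fin d → ℕ) : Fin d → ℤ := fun i => (p i : ℤ)

/-- A staircase in `ℕ^d`: a subset whose complement is stable under addition
(equivalently, a downward closed subset). -/
def IsStaircase {d : ℕ} (E : Set (Fin d → ℕ)) : Prop :=
  ∀ x, x ∉ E → ∀ y : Fin d → ℕ, x + y ∉ E

/-- The regular staircase `R_μ = {α ∈ ℕ^d : α₁ + ⋯ + α_d < μ}`. -/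
def regStaircase (d μ : ℕ) : Set (Fin d → ℕ) := {α | ∑ i, α i < μ}

/-- The scaled staircase `(a₁,…,a_d)·E = {m ∈ ℕ^d : (⌊m₁/a₁⌋,…,⌊m_d/a_d⌋) ∈ E}`. -/
def scaleSet {d : ℕ} (a : Fin d → ℕ) (E : Set (Fin d → ℕ)) : Set (Fin d → ℕ) :=
  {m | (fun i => m i / a i) ∈ E}

/-- The points of `ℕ^d` on the line through `p` with direction `Δ`. -/
def lineThrough {d : ℕ} (Δ : Fin d → ℤ) (p : Fin d → ℕ) : Set (Fin d → ℕ) :=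
  {q | ∃ t : ℤ, toInt q = toInt p + t • Δ}

/-- The specialization `Δ(E)` of a (finite) subset `E ⊆ ℕ^d` along the direction `Δ`:
`p ∈ Δ(E)` iff the number of integers `i > 0` with `p + iΔ ∈ ℕ^d` is strictly smaller
than `#(E ∩ L_p)`, where `L_p` is the line through `p` with direction `Δ`.  Equivalently,
on each line `L` with direction `Δ`, `Δ(E) ∩ L` consists of the `#(E ∩ L)` largest
elements of `L ∩ ℕ^d` for the order `m < m'` iff `m' = m + iΔ`, `i > 0`. -/
def deltaOf {d : ℕ} (Δ : Fin d → ℤ) (E : Set (Fin d → ℕ)) : Set (Fin d → ℕ) :=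
  {p | Set.ncard {i : ℕ | 0 < i ∧ ∃ q : Fin d → ℕ, toInt q = toInt p + (i : ℤ) • Δ}
        < Set.ncard (E ∩ lineThrough Δ p)}

/-- `Δ ∈ ℤ^d` is admissible if some coordinate equals `1`, all the others are `≤ 0`,
and at least one coordinate besides the `1` is nonzero. -/
def IsAdmissible {d : ℕ} (Δ : Fin d → ℤ) : Prop :=
  ∃ i, Δ i = 1 ∧ (∀ k, k ≠ i → Δ k ≤ 0) ∧ ∃ j, j ≠ i ∧ Δ j ≠ 0

/-- The point `p + iΔ`, each of its coordinates being truncated at `0`. It is the genuine translate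
exactly when `p + iΔ` lies in `ℕ^d`. -/
def stepPoint {d : ℕ} (Δ : Fin d → ℤ) (p : Fin d → ℕ) (i : ℕ) : Fin d → ℕ :=
  fun k => ((p k : ℤ) + (i : ℤ) * Δ k).toNat

/-- Where the translate exists in `ℕ^d`, the truncation in `stepPoint` is invisible. -/
theorem stepPoint_eq {d : ℕ} {Δ : Fin d → ℤ} {p q : Fin d → ℕ} {i : ℕ}
    (h : toInt q = toInt p + (i : ℤ) • Δ) : stepPoint Δ p i = q := by
  funext k
  have hk := congrFun h k
  simp only [toInt, Pi.add_apply, Pi.smul_apply, smul_eq_mul] at hk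
  simp only [stepPoint]
  omega

theorem IsAdmissible.sum_nonpos {d : ℕ} {Δ : Fin d → ℤ} (hΔ : IsAdmissible Δ) :
    ∑ k, Δ k ≤ 0 := by
  obtain ⟨i, hi, hneg, j, hji, hj⟩ := hΔ
  have hj' : Δ j ≤ -1 := by have := hneg j hji; omega
  have h1 := Finset.add_sum_erase Finset.univ Δ (Finset.mem_univ i)
  have h2 : ∑ k ∈ Finset.univ.erase i, Δ k ≤ Δ j :=
    calc ∑ k ∈ Finset.univ.erase i, Δ k
        = Δ j + ∑ k ∈ (Finset.univ.erase i).erase j, Δ k :=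
          (Finset.add_sum_erase _ _ (by simp [hji])).symm
      _ ≤ Δ j := by
          have := Finset.sum_nonpos (s := (Finset.univ.erase i).erase j) (f := Δ)
            fun k hk => hneg k (by simp at hk; exact hk.2)
          omega
  omega

/-- Moving forward along an admissible direction does not increase the sum of the coordinates, so
it never leaves `R_μ`. -/
theorem IsAdmissible.sum_le {d : ℕ} {Δ : Fin d → ℤ} (hΔ : IsAdmissible Δ) {p q : Fin d → ℕ}
    {t : ℤ} (ht : 0 ≤ t) (h : toInt q = toInt p + t • Δ) : ∑ k, q k ≤ ∑ k, p k := by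
  have hs : ∑ k, (q k : ℤ) = ∑ k, (p k : ℤ) + t * ∑ k, Δ k := by
    rw [Finset.mul_sum, ← Finset.sum_add_distrib]
    exact Finset.sum_congr rfl fun k _ => by simpa [toInt] using congrFun h k
  have := mul_nonpos_of_nonneg_of_nonpos ht hΔ.sum_nonpos
  zify
  linarith

/-- Only finitely many forward translates stay in `ℕ^d`, since some coordinate of `Δ` is negative.
This keeps `Set.ncard` in the definition of `deltaOf` from taking its junk value. -/
theorem IsAdmissible.finite_steps {d : ℕ} {Δ : Fin d → ℤ} (hΔ : IsAdmissible Δ)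
    (p : Fin d → ℕ) :
    {i : ℕ | 0 < i ∧ ∃ q : Fin d → ℕ, toInt q = toInt p + (i : ℤ) • Δ}.Finite := by
  obtain ⟨i₀, -, hneg, j, hji, hj⟩ := hΔ
  have hj' : Δ j ≤ -1 := by have := hneg j hji; omega
  refine (Set.finite_Iic (p j)).subset ?_
  rintro i ⟨-, q, hq⟩
  have hk := congrFun hq j
  simp only [toInt, Pi.add_apply, Pi.smul_apply, smul_eq_mul] at hk
  have : (i : ℤ) ≤ p j := by nlinarith [Int.natCast_nonneg i, Int.natCast_nonneg (q j)]
  exact Set.mem_Iic.2 (by exact_mod_cast this)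

theorem finite_regStaircase (d μ : ℕ) : (regStaircase d μ).Finite := by
  refine (Set.finite_Iic (fun _ : Fin d => μ)).subset fun α hα k => ?_
  exact (Finset.single_le_sum (fun _ _ => Nat.zero_le _) (Finset.mem_univ k)).trans
    (le_of_lt hα)

/-- For any admissible direction `Δ`, the regular staircase is fixed by specialization:
`Δ(R_μ) = R_μ`. -/
theorem deltaOf_regStaircase (d : ℕ) (Δ : Fin d → ℤ) (hΔ : IsAdmissible Δ) (μ : ℕ) :
    deltaOf Δ (regStaircase d μ) = regStaircase d μ := by
  obtain ⟨i₀, hi₀, -⟩ := id hΔ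
  ext p
  have hfin := hΔ.finite_steps p
  simp only [deltaOf, Set.mem_ofPred_eq]
  set S := {i : ℕ | 0 < i ∧ ∃ q : Fin d → ℕ, toInt q = toInt p + (i : ℤ) • Δ} with hS
  constructor
  · intro hlt
    by_contra hp
    -- A point of `R_μ` at `p` or behind it would force `p ∈ R_μ`.
    have hsub : regStaircase d μ ∩ lineThrough Δ p ⊆ stepPoint Δ p '' S := by
      rintro q ⟨hq, t, ht⟩
      have ht0 : 0 < t := by
        by_contra hle
        have hpq : toInt p = toInt q + (-t) • Δ := by rw [ht]; module
        exact hp ((hΔ.sum_le (by omega) hpq).trans_lt hq)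
      lift t to ℕ using ht0.le
      exact ⟨t, ⟨by exact_mod_cast ht0, q, ht⟩, stepPoint_eq ht⟩
    have h1 := Set.ncard_le_ncard hsub (hfin.image _)
    have h2 := Set.ncard_image_le (f := stepPoint Δ p) hfin
    omega
  · intro hp
    have hmem : ∀ i ∈ insert 0 S, toInt (stepPoint Δ p i) = toInt p + (i : ℤ) • Δ := by
      rintro i (rfl | ⟨-, q, hq⟩)
      · have h0 : toInt p = toInt p + ((0 : ℕ) : ℤ) • Δ := by simp
        rwa [stepPoint_eq h0]
      · rwa [stepPoint_eq hq]
    have h0 : 0 ∉ S := fun h => lt_irrefl 0 h.1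
    rw [← Nat.succ_le_iff, Nat.succ_eq_add_one, ← Set.ncard_insert_of_notMem h0 hfin]
    refine Set.ncard_le_ncard_of_injOn (stepPoint Δ p) ?_ ?_
      ((finite_regStaircase d μ).inter_of_left _)
    · intro i hi
      exact ⟨(hΔ.sum_le (Int.natCast_nonneg i) (hmem i hi)).trans_lt hp, i, hmem i hi⟩
    · -- The coordinate where `Δ` equals `1` recovers `i` from `p + iΔ`.
      intro i hi j hj hij
      have h := congrFun ((hmem i hi).symm.trans ((congrArg toInt hij).trans (hmem j hj))) i₀
      simpa [hi₀] using h
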